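/- Let V ⊆ E be an F-linear subspace of dimension r, and let G be the subgroup of GL₂(E) consisting of the matrices [[1, b], [0, 1]] with b ∈ V. Then the number of orbits of G acting on ℙ¹(E) equals q^{N−r} + 1. -/

import Mathlib

/-!
Every line of `E²` is either spanned by `(1, 0)` or by a unique vector `(x, 1)`, so `ℙ¹(E)` is
`E ∪ {∞}` (`linePt_bijective`). In this coordinate the matrix `[[1, b], [0, 1]]` fixes `∞` and
translates `x` to `x + b` (`matActs_linePt`). Hence the orbits are `{∞}` and the cosets of `V`
in `E`, and `E ⧸ V` has `q ^ (N - r)` elements.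
-/

open Matrix

/-- `ℙ¹(E)`: the set of one-dimensional `E`-linear subspaces of `E²`. -/
def ProjLine (E : Type*) [Field E] : Type _ :=
  {W : Submodule E (Fin 2 → E) // Module.finrank E W = 1}

/-- The image of a subspace of `E²` under the linear map given by a matrix. -/
noncomputable def matActs {E : Type*} [Field E] (A : Matrix (Fin 2) (Fin 2) E)
    (W : Submodule E (Fin 2 → E)) : Submodule E (Fin 2 → E) :=
  W.map (Matrix.toLin' A)

/-- The orbit relation on `ℙ¹(E)` for the action of the group of matrices
`[[1, b], [0, 1]]` with `b ∈ V`. -/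
def unipOrbitRel (F E : Type*) [Field F] [Field E] [Algebra F E]
    (V : Submodule F E) (W₁ W₂ : ProjLine E) : Prop :=
  ∃ b ∈ V, matActs !![1, b; 0, 1] W₁.1 = W₂.1

/-- A spanning vector of the line with affine coordinate `x`, where `none` is the point at
infinity. -/
def lineVec {E : Type*} [Field E] : Option E → Fin 2 → E
  | none => ![1, 0]
  | some x => ![x, 1]

lemma lineVec_ne_zero {E : Type*} [Field E] (o : Option E) : lineVec o ≠ 0 := by
  cases o with
  | none => exact fun h => one_ne_zero (α := E) (by simpa [lineVec] using congrFun h 0)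
  | some x => exact fun h => one_ne_zero (α := E) (by simpa [lineVec] using congrFun h 1)

/-- The point of `ℙ¹(E)` with affine coordinate in `E ∪ {∞}`. -/
def linePt {E : Type*} [Field E] (o : Option E) : ProjLine E :=
  ⟨E ∙ lineVec o, finrank_span_singleton (lineVec_ne_zero o)⟩

lemma linePt_bijective {E : Type*} [Field E] :
    Function.Bijective (linePt : Option E → ProjLine E) := by
  constructor
  · intro a b h
    have h1 : lineVec a ∈ (E ∙ lineVec b) := by
      have : (E ∙ lineVec a) = (E ∙ lineVec b) := congrArg Subtype.val h
      rw [← this]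
      exact Submodule.mem_span_singleton_self _
    obtain ⟨c, hc⟩ := Submodule.mem_span_singleton.1 h1
    have h0 := congrFun hc 0
    have h1 := congrFun hc 1
    cases a <;> cases b <;> simp_all [lineVec]
  · rintro ⟨W, hW⟩
    obtain ⟨v, hv, hs⟩ := finrank_eq_one_iff'.1 hW
    have hWv : W = E ∙ (v : Fin 2 → E) := by
      refine le_antisymm (fun w hw => ?_) (by simp)
      obtain ⟨c, hc⟩ := hs ⟨w, hw⟩
      exact Submodule.mem_span_singleton.2 ⟨c, congrArg Subtype.val hc⟩
    obtain ⟨v, hvW⟩ := v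
    have hv0 : v ≠ 0 := fun h => hv (Subtype.ext h)
    simp only at hWv
    -- It suffices to write `v` as a nonzero multiple of one of the chosen vectors.
    have key : ∃ o : Option E, ∃ c : E, c ≠ 0 ∧ v = c • lineVec o := by
      by_cases h : v 1 = 0
      · refine ⟨none, v 0, fun h0 => hv0 ?_, ?_⟩
        · ext i; fin_cases i <;> simp [h, h0]
        · ext i; fin_cases i <;> simp [lineVec, h]
      · refine ⟨some (v 0 / v 1), v 1, h, ?_⟩
        ext i; fin_cases i <;> simp [lineVec, mul_div_cancel₀, h]
    obtain ⟨o, c, hc, rfl⟩ := key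
    refine ⟨o, Subtype.ext ?_⟩
    exact (Submodule.span_singleton_smul_eq (IsUnit.mk0 c hc) _).symm.trans hWv.symm

lemma matActs_linePt {E : Type*} [Field E] (b : E) (o : Option E) :
    matActs !![1, b; 0, 1] (linePt o).1 = (linePt (o.map (· + b))).1 := by
  have : Matrix.toLin' !![1, b; 0, 1] (lineVec o) = lineVec (o.map (· + b)) := by
    ext i
    cases o <;> fin_cases i <;> simp [lineVec]
  simp only [matActs, linePt, Submodule.map_span, Set.image_singleton, this]

lemma unipOrbitRel_linePt {F E : Type*} [Field F] [Field E] [Algebra F E]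
    (V : Submodule F E) (o p : Option E) :
    unipOrbitRel F E V (linePt o) (linePt p) ↔ o.map V.mkQ = p.map V.mkQ := by
  have h : ∀ b, matActs !![1, b; 0, 1] (linePt o).1 = (linePt p).1 ↔ o.map (· + b) = p := by
    intro b
    rw [matActs_linePt]
    exact Subtype.ext_iff.symm.trans linePt_bijective.1.eq_iff
  simp only [unipOrbitRel, h]
  cases o with
  | none =>
    cases p with
    | none => simpa using ⟨0, V.zero_mem⟩
    | some y => simp
  | some x =>
    cases p with
    | none => simp
    | some y =>
      simp only [Option.map_some, Option.some.injEq, Submodule.mkQ_apply]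
      rw [eq_comm (a := Submodule.Quotient.mk x), Submodule.Quotient.eq]
      constructor
      · rintro ⟨b, hb, rfl⟩
        simpa using hb
      · exact fun hb => ⟨y - x, hb, by ring⟩

/-- The orbits are the cosets of `V` together with the point at infinity. -/
lemma card_orbits {F E : Type*} [Field F] [Field E] [Algebra F E] (V : Submodule F E) :
    Nat.card (Quot (unipOrbitRel F E V)) = Nat.card (Option (E ⧸ V)) := by
  let e : Option E ≃ ProjLine E := Equiv.ofBijective _ linePt_bijective
  have hrel : ∀ o p, (Setoid.ker (Option.map V.mkQ)) o p ↔ unipOrbitRel F E V (e o) (e p) :=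
    fun o p => (unipOrbitRel_linePt V o p).symm
  refine Nat.card_congr ((Quot.congr e hrel).symm.trans ?_)
  refine Setoid.quotientKerEquivOfSurjective (Option.map V.mkQ) ?_
  rintro (_ | y)
  · exact ⟨none, rfl⟩
  · obtain ⟨x, rfl⟩ := V.mkQ_surjective y
    exact ⟨some x, rfl⟩

theorem stmt_7 (F E : Type*) [Field F] [Fintype F] [Field E] [Algebra F E]
    (q N r : ℕ) (hq : q = Fintype.card F) (hN : 1 ≤ N)
    (hNE : Module.finrank F E = N)
    (V : Submodule F E) (hV : Module.finrank F V = r) (hr : r ≤ N) :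
    Nat.card (Quot (unipOrbitRel F E V)) = q ^ (N - r) + 1 := by
  -- A positive `finrank` forces `E` to be finite-dimensional.
  have : Module.Finite F E := Module.finite_of_finrank_pos (by omega)
  have : Finite (E ⧸ V) := Module.finite_of_finite F
  have hd : Module.finrank F (E ⧸ V) = N - r := by
    have := V.finrank_quotient_add_finrank
    omega
  rw [card_orbits, Finite.card_option, Module.natCard_eq_pow_finrank (K := F), hd, hq,
    Nat.card_eq_fintype_card]
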